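/- If (x*,y*) ∈ K is a local minimizer of the ℓ0-problem, then there exist (x_g,y_g) ∈ ∂g(x*,y*) and (x_h,y_h) ∈ ∂h(x*,y*) such that, setting (x̄*,ȳ*) = (x_g,y_g) − (x_h,y_h), one has ⟨x̄*, x − x*⟩ + ⟨ȳ*, y − y*⟩ ≥ 0 for all (x,y) ∈ K(x*), where K(x*) = {(x,y) ∈ K : x_i = 0 for every index i with x*_i = 0}. -/

import Mathlib

/-- The number of nonzero components of `x`, as a real number. -/
noncomputable def zeroNorm {n : ℕ} (x : Fin n → ℝ) : ℝ :=
  ((Finset.univ.filter fun i => x i ≠ 0).card : ℝ)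

/-- Canonical inner product on `ℝⁿ × ℝᵐ`. -/
def dotE {n m : ℕ} (u v : (Fin n → ℝ) × (Fin m → ℝ)) : ℝ :=
  (∑ i, u.1 i * v.1 i) + (∑ j, u.2 j * v.2 j)

/-- Convex subdifferential of a finite function on `ℝⁿ × ℝᵐ`. -/
def subdiffE {n m : ℕ} (φ : (Fin n → ℝ) × (Fin m → ℝ) → ℝ)
    (p : (Fin n → ℝ) × (Fin m → ℝ)) : Set ((Fin n → ℝ) × (Fin m → ℝ)) :=
  {v | ∀ q, φ q ≥ φ p + dotE (q - p) v}

/-!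
Points of `K(x*)` have at most as many nonzero components as `x*`, so dropping the penalty leaves
`(x*, y*)` a local minimizer of `g - h` on `K(x*)`. Replacing `h` by the affine minorant given by an
arbitrary subgradient `v_h` at `(x*, y*)` makes the objective convex, so `(x*, y*)` becomes a global
minimizer on `K(x*)`, that is, `v_h` is a subgradient of `g` relative to `K(x*)`. Separating the
strict epigraph of `g` from the hypograph over `K(x*)` of the affine function of slope `v_h` gives a
subgradient `v_g` of `g` on the whole space with `v_h ≤ v_g` in all directions from `(x*, y*)` into
`K(x*)`.
-/

open Set

theorem isLocalMinOn_iff_exists_norm_sub_lt {E β : Type*} [SeminormedAddCommGroup E] [Preorder β]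
    {f : E → β} {s : Set E} {a : E} :
    IsLocalMinOn f s a ↔ ∃ δ > 0, ∀ x ∈ s, ‖x - a‖ < δ → f a ≤ f x := by
  simp only [IsLocalMinOn, IsMinFilter, Metric.nhdsWithin_basis_ball.eventually_iff, mem_inter_iff,
    mem_ball_iff_norm]
  grind

theorem isLocalMinOn_of_add {α β : Type*} [TopologicalSpace α] [AddCommGroup β] [PartialOrder β]
    [IsOrderedAddMonoid β] {f r : α → β} {s t : Set α} {a : α}
    (hmin : IsLocalMinOn (fun x => f x + r x) s a) (hts : t ⊆ s) (hr : ∀ x ∈ t, r x ≤ r a) :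
    IsLocalMinOn f t a := by
  filter_upwards [hmin.on_subset hts, self_mem_nhdsWithin] with x hx hxt
  exact le_of_add_le_add_right (hx.trans (add_le_add_right (hr x hxt) (f x)))

theorem isOpen_strict_epigraph {α : Type*} [TopologicalSpace α] {φ : α → ℝ} {s : Set α}
    (hs : IsOpen s) (hφ : ContinuousOn φ s) :
    IsOpen {z : α × ℝ | z.1 ∈ s ∧ φ z.1 < z.2} := by
  have hcont : ContinuousOn (fun z : α × ℝ => z.2 - φ z.1) (Prod.fst ⁻¹' s) :=
    continuousOn_snd.sub (hφ.comp continuousOn_fst (mapsTo_preimage _ _))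
  simpa only [preimage, mem_Ioi, sub_pos] using!
    hcont.isOpen_inter_preimage (hs.preimage continuous_fst) (isOpen_Ioi (a := 0))

theorem continuous_of_convexOn_univ {E : Type*} [NormedAddCommGroup E] [NormedSpace ℝ E]
    [FiniteDimensional ℝ E] {φ : E → ℝ} (hφ : ConvexOn ℝ univ φ) : Continuous φ :=
  continuousOn_univ.1 (hφ.continuousOn isOpen_univ)

section Subgradient

variable {E : Type*} [AddCommGroup E] [Module ℝ E] [TopologicalSpace E]

/-- `l` is a subgradient of `φ` at `p`: the affine function through `(p, φ p)` with slope `l` is a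
minorant of `φ` on the whole space. -/
def IsSubgradientAt (φ : E → ℝ) (l : E →L[ℝ] ℝ) (p : E) : Prop :=
  ∀ q, φ p + l (q - p) ≤ φ q

theorem apply_mk_eq_add_mul (F : E × ℝ →L[ℝ] ℝ) (x : E) (r : ℝ) :
    F (x, r) = F (x, 0) + r * F (0, 1) := by
  rw [← smul_eq_mul, ← map_smul, ← map_add]
  simp

variable [IsTopologicalAddGroup E] [ContinuousSMul ℝ E]

theorem exists_affine_between {φ ψ : E → ℝ} {s t : Set E} (hs : IsOpen s)
    (hφ : ConvexOn ℝ s φ) (hφc : ContinuousOn φ s) (hψ : ConcaveOn ℝ t ψ)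
    (hst : (s ∩ t).Nonempty) (hle : ∀ x ∈ s ∩ t, ψ x ≤ φ x) :
    ∃ (l : E →L[ℝ] ℝ) (a : ℝ), (∀ x ∈ s, l x + a ≤ φ x) ∧ ∀ x ∈ t, ψ x ≤ l x + a := by
  have hdisj : Disjoint {z : E × ℝ | z.1 ∈ s ∧ φ z.1 < z.2} {z | z.1 ∈ t ∧ z.2 ≤ ψ z.1} :=
    disjoint_left.2 fun z hz hz' =>
      (hz.2.trans_le hz'.2).not_ge (hle z.1 ⟨hz.1, hz'.1⟩)
  obtain ⟨F, u, hlt, hge⟩ := geometric_hahn_banach_open hφ.convex_strict_epigraph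
    (isOpen_strict_epigraph hs hφc) hψ.convex_hypograph hdisj
  obtain ⟨c, hc⟩ : ∃ c, F (0, 1) = -c := ⟨-F (0, 1), (neg_neg _).symm⟩
  have habove {x : E} (hx : x ∈ s) {r : ℝ} (hr : φ x < r) : F (x, 0) - u < r * c := by
    have := hlt (x, r) ⟨hx, hr⟩
    rw [apply_mk_eq_add_mul, hc] at this
    linarith
  have hbelow {x : E} (hx : x ∈ t) : ψ x * c ≤ F (x, 0) - u := by
    have := hge (x, ψ x) ⟨hx, le_rfl⟩
    rw [apply_mk_eq_add_mul, hc] at this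
    linarith
  have hcpos : 0 < c := by
    obtain ⟨x, hxs, hxt⟩ := hst
    have hlt : ψ x * c < (φ x + 1) * c := (hbelow hxt).trans_lt (habove hxs (lt_add_one (φ x)))
    have hgap : 0 < φ x + 1 - ψ x := by linarith [hle x ⟨hxs, hxt⟩]
    exact (mul_pos_iff_of_pos_left hgap).1 (by linarith)
  let l : E →L[ℝ] ℝ := c⁻¹ • F.comp (ContinuousLinearMap.inl ℝ E ℝ)
  have hl (x : E) : l x + -(u / c) = (F (x, 0) - u) / c := by
    simp only [l, smul_apply, ContinuousLinearMap.comp_apply, ContinuousLinearMap.inl_apply,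
      smul_eq_mul]
    ring
  refine ⟨l, -(u / c), fun x hx => ?_, fun x hx => ?_⟩
  · rw [hl]
    exact le_of_forall_gt fun r hr => (div_lt_iff₀ hcpos).2 (habove hx hr)
  · rw [hl]
    exact (le_div_iff₀ hcpos).2 (hbelow hx)

theorem exists_isSubgradientAt_ge_on {φ : E → ℝ} (hφ : ConvexOn ℝ univ φ) (hφc : Continuous φ)
    {C : Set E} (hC : Convex ℝ C) {p : E} (hp : p ∈ C) {m : E →L[ℝ] ℝ}
    (hm : ∀ q ∈ C, φ p + m (q - p) ≤ φ q) :
    ∃ l, IsSubgradientAt φ l p ∧ ∀ q ∈ C, m (q - p) ≤ l (q - p) := by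
  have hconc : ConcaveOn ℝ C fun q => m q + (φ p - m p) :=
    (m.toLinearMap.concaveOn hC).add_const _
  obtain ⟨l, a, hl, hml⟩ := exists_affine_between isOpen_univ hφ hφc.continuousOn hconc
    ⟨p, mem_univ p, hp⟩ fun q hq => by
      have := hm q hq.2
      rw [map_sub] at this
      linarith
  have htouch : l p + a = φ p :=
    le_antisymm (hl p (mem_univ p)) (by linarith [hml p hp])
  refine ⟨l, fun q => ?_, fun q hq => ?_⟩
  · rw [map_sub]
    linarith [hl q (mem_univ q)]
  · rw [map_sub, map_sub]
    linarith [hml q hq]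

theorem exists_isSubgradientAt {φ : E → ℝ} (hφ : ConvexOn ℝ univ φ) (hφc : Continuous φ) (p : E) :
    ∃ l, IsSubgradientAt φ l p := by
  obtain ⟨l, hl, -⟩ := exists_isSubgradientAt_ge_on hφ hφc (convex_singleton p)
    (mem_singleton p) (m := 0) (by simp)
  exact ⟨l, hl⟩

theorem exists_isSubgradientAt_ge_on_of_isLocalMinOn_sub {g h : E → ℝ} (hg : ConvexOn ℝ univ g)
    (hgc : Continuous g) {C : Set E} (hC : Convex ℝ C) {p : E} (hp : p ∈ C)
    (hmin : IsLocalMinOn (fun q => g q - h q) C p) {m : E →L[ℝ] ℝ} (hm : IsSubgradientAt h m p) :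
    ∃ l, IsSubgradientAt g l p ∧ ∀ q ∈ C, m (q - p) ≤ l (q - p) := by
  have hconv : ConvexOn ℝ C fun q => g q - m q :=
    (hg.subset (subset_univ C) hC).sub (m.toLinearMap.concaveOn hC)
  have hlin : IsLocalMinOn (fun q => g q - m q) C p := by
    refine isLocalMinOn_of_add (r := fun q => m q - h q) (by simpa using hmin) subset_rfl
      fun q _ => ?_
    have := hm q
    rw [map_sub] at this
    linarith
  refine exists_isSubgradientAt_ge_on hg hgc hC hp fun q hq => ?_
  have : g p - m p ≤ g q - m q := IsMinOn.of_isLocalMinOn_of_convexOn hp hlin hconv hq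
  rw [map_sub]
  linarith

end Subgradient

section Coordinates

variable {n m : ℕ}

theorem dotE_comm (u v : (Fin n → ℝ) × (Fin m → ℝ)) : dotE u v = dotE v u := by
  simp only [dotE, mul_comm]

/-- The identification of `ℝⁿ × ℝᵐ` with its continuous dual given by `dotE`. -/
noncomputable def dotEquiv :
    ((Fin n → ℝ) × (Fin m → ℝ)) ≃ₗ[ℝ] ((Fin n → ℝ) × (Fin m → ℝ)) →L[ℝ] ℝ :=
  ((dotProductEquiv ℝ (Fin n)).prodCongr (dotProductEquiv ℝ (Fin m))).trans <|
    (Module.dualProdDualEquivDual ℝ _ _).trans LinearMap.toContinuousLinearMap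

theorem dotEquiv_apply (u v : (Fin n → ℝ) × (Fin m → ℝ)) : dotEquiv u v = dotE u v :=
  rfl

theorem mem_subdiffE_iff {φ : (Fin n → ℝ) × (Fin m → ℝ) → ℝ} {p v : (Fin n → ℝ) × (Fin m → ℝ)} :
    v ∈ subdiffE φ p ↔ IsSubgradientAt φ (dotEquiv v) p := by
  simp only [subdiffE, IsSubgradientAt, dotEquiv_apply, dotE_comm v, mem_ofPred_eq, ge_iff_le]

theorem subdiffE_nonempty {φ : (Fin n → ℝ) × (Fin m → ℝ) → ℝ} (hφ : ConvexOn ℝ univ φ)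
    (p : (Fin n → ℝ) × (Fin m → ℝ)) : (subdiffE φ p).Nonempty := by
  obtain ⟨l, hl⟩ := exists_isSubgradientAt hφ (continuous_of_convexOn_univ hφ) p
  obtain ⟨v, rfl⟩ := dotEquiv.surjective l
  exact ⟨v, mem_subdiffE_iff.2 hl⟩

theorem zeroNorm_le_zeroNorm {x y : Fin n → ℝ} (hxy : ∀ i, y i = 0 → x i = 0) :
    zeroNorm x ≤ zeroNorm y :=
  Nat.cast_le.2 <| Finset.card_le_card <| Finset.monotone_filter_right _ fun i _ => mt (hxy i)

/-- The set `K(x)` of the points of `K` whose first component vanishes wherever `x` does. -/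
def restrictSupport (K : Set ((Fin n → ℝ) × (Fin m → ℝ))) (x : Fin n → ℝ) :
    Set ((Fin n → ℝ) × (Fin m → ℝ)) :=
  {q ∈ K | ∀ i, x i = 0 → q.1 i = 0}

theorem convex_restrictSupport {K : Set ((Fin n → ℝ) × (Fin m → ℝ))} (hK : Convex ℝ K)
    (x : Fin n → ℝ) : Convex ℝ (restrictSupport K x) := by
  refine fun a ha b hb s t hs ht hst => ⟨hK ha.1 hb.1 hs ht hst, fun i hi => ?_⟩
  simp [ha.2 i hi, hb.2 i hi]

theorem stmt_7_general {K : Set ((Fin n → ℝ) × (Fin m → ℝ))} (hK : Convex ℝ K)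
    {g h : (Fin n → ℝ) × (Fin m → ℝ) → ℝ} (hg : ConvexOn ℝ univ g) {lam : ℝ} (hlam : 0 ≤ lam)
    {p : (Fin n → ℝ) × (Fin m → ℝ)} (hp : p ∈ K)
    (hmin : IsLocalMinOn (fun q => g q - h q + lam * zeroNorm q.1) K p)
    {vh : (Fin n → ℝ) × (Fin m → ℝ)} (hvh : vh ∈ subdiffE h p) :
    ∃ vg ∈ subdiffE g p, ∀ q ∈ restrictSupport K p.1, 0 ≤ dotE (vg - vh) (q - p) := by
  have hmin' : IsLocalMinOn (fun q => g q - h q) (restrictSupport K p.1) p :=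
    isLocalMinOn_of_add hmin (sep_subset _ _) fun q hq =>
      mul_le_mul_of_nonneg_left (zeroNorm_le_zeroNorm hq.2) hlam
  obtain ⟨l, hl, hle⟩ := exists_isSubgradientAt_ge_on_of_isLocalMinOn_sub hg
    (continuous_of_convexOn_univ hg) (convex_restrictSupport hK p.1) ⟨hp, fun _ => id⟩ hmin'
    (mem_subdiffE_iff.1 hvh)
  obtain ⟨vg, rfl⟩ := dotEquiv.surjective l
  refine ⟨vg, mem_subdiffE_iff.2 hl, fun q hq => ?_⟩
  rw [← dotEquiv_apply, map_sub dotEquiv, sub_apply, sub_nonneg]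
  exact hle q hq

end Coordinates

/-- a local minimizer of the ℓ0-problem satisfies the first-order
condition `⟨x̄*, x - x*⟩ + ⟨ȳ*, y - y*⟩ ≥ 0` on `K(x*)` for some
`(x̄*,ȳ*) ∈ ∂g(x*,y*) - ∂h(x*,y*)`. -/
theorem stmt_7 {n m : ℕ}
    (K : Set ((Fin n → ℝ) × (Fin m → ℝ))) (hK : Convex ℝ K)
    (g h : (Fin n → ℝ) × (Fin m → ℝ) → ℝ)
    (hg : ConvexOn ℝ Set.univ g) (hh : ConvexOn ℝ Set.univ h)
    (f : (Fin n → ℝ) × (Fin m → ℝ) → ℝ) (hf : ∀ p, f p = g p - h p)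
    (lam : ℝ) (hlam : 0 < lam)
    (pstar : (Fin n → ℝ) × (Fin m → ℝ)) (hpstar : pstar ∈ K)
    (hloc : ∃ δ > (0 : ℝ), ∀ q ∈ K, ‖q - pstar‖ < δ →
      f pstar + lam * zeroNorm pstar.1 ≤ f q + lam * zeroNorm q.1) :
    ∃ vg ∈ subdiffE g pstar, ∃ vh ∈ subdiffE h pstar,
      ∀ q ∈ K, (∀ i, pstar.1 i = 0 → q.1 i = 0) →
        0 ≤ dotE (vg - vh) (q - pstar) := by
  simp only [hf] at hloc
  obtain ⟨vh, hvh⟩ := subdiffE_nonempty hh pstar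
  obtain ⟨vg, hvg, hle⟩ := stmt_7_general hK hg hlam.le hpstar
    (isLocalMinOn_iff_exists_norm_sub_lt.2 hloc) hvh
  exact ⟨vg, hvg, vh, hvh, fun q hq hq0 => hle q ⟨hq, hq0⟩⟩
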